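/- arXiv:2002.07369 — 2 statements merged into one kernel-verified Lean document; each statement's English description precedes it below -/
import Mathlib

section
/- In the Coxeter group W of type E6, for all integers i with 1 ≤ i ≤ 3, the identity x'_{5,i} · x4 · x5 = x3 · x'_{5,i} · x4 holds. -/
/-- The descending product `x i * x (i-1) * ... * x j` (equal to `1` when `j > i`). -/
def descProd {G : Type*} [Group G] (x : ℤ → G) (i j : ℤ) : G :=
  ((List.range (i + 1 - j).toNat).map (fun n => x (i - (n : ℤ)))).prod

/-- The product `x i * x (i-2) * x (i-3) * ... * x j`, with the conventions
`primProd x i (i-1) = x i` and `primProd x i j = 1` for `j ≥ i`. -/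
def primProd {G : Type*} [Group G] (x : ℤ → G) (i j : ℤ) : G :=
  if i ≤ j then 1 else x i * descProd x (i - 2) j

/-!
Write `s = x n` and `t = x (n - 2)`. The braid relation `s t s = t s t` says that right
multiplication of `s t` by `s` equals left multiplication by `t`, i.e. `s t` semiconjugates `s` to
`t`. The remaining factors of `x'_{n,j} x_{n-1} = s t x_{n-3} ⋯ x_j x_{n-1}` all commute with `s`,
so the whole product still semiconjugates `s` to `t`.
-/

theorem semiconjBy_mul_of_braid {S : Type*} [Semigroup S] {s t : S}
    (hbraid : s * t * s = t * s * t) : SemiconjBy (s * t) s t :=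
  hbraid.trans (mul_assoc t s t)

section DescendingProducts

variable {G : Type*} [Group G] (x : ℤ → G)

-- In `descProd` the range is coerced as a whole to `List ℤ`, so its body maps over integers.
theorem descProd_eq_prod_map_range (i j : ℤ) :
    descProd x i j = ((List.range (i + 1 - j).toNat).map fun m : ℕ => x (i - m)).prod := by
  simp [descProd, Function.comp_def, ← List.map_eq_flatMap]

theorem descProd_eq_mul_descProd_sub_one {i j : ℤ} (hji : j ≤ i) :
    descProd x i j = x i * descProd x (i - 1) j := by
  have hlength : (i + 1 - j).toNat = (i - 1 + 1 - j).toNat + 1 := by lia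
  have hindex (m : ℕ) : i - ((m + 1 : ℕ) : ℤ) = i - 1 - m := by lia
  simp only [descProd_eq_prod_map_range, hlength, List.range_succ_eq_map, List.map_cons,
    List.map_map, List.prod_cons, Function.comp_def, Nat.succ_eq_add_one, hindex, Nat.cast_zero,
    sub_zero]

theorem primProd_eq_mul_mul_descProd {n j : ℤ} (hj : j ≤ n - 2) :
    primProd x n j = x n * x (n - 2) * descProd x (n - 3) j := by
  have hnj : ¬ n ≤ j := by lia
  rw [primProd, if_neg hnj, descProd_eq_mul_descProd_sub_one x hj, ← mul_assoc,
    show n - 2 - 1 = n - 3 by ring]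

variable {x}

theorem commute_descProd_left {g : G} {i j : ℤ}
    (hcomm : ∀ k, j ≤ k → k ≤ i → Commute (x k) g) : Commute (descProd x i j) g := by
  rw [descProd_eq_prod_map_range]
  refine Commute.list_prod_left _ _ fun a ha => ?_
  obtain ⟨m, hm, rfl⟩ := List.mem_map.mp ha
  have hlt : m < (i + 1 - j).toNat := List.mem_range.mp hm
  exact hcomm _ (by lia) (by lia)

theorem semiconjBy_primProd {n j : ℤ} (hj : j ≤ n - 2)
    (hbraid : x n * x (n - 2) * x n = x (n - 2) * x n * x (n - 2))
    (hcomm : ∀ k, j ≤ k → k < n - 2 → Commute (x k) (x n)) :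
    SemiconjBy (primProd x n j) (x n) (x (n - 2)) := by
  have htail : Commute (descProd x (n - 3) j) (x n) :=
    commute_descProd_left fun k hjk hkn => hcomm k hjk (by lia)
  rw [primProd_eq_mul_mul_descProd x hj]
  exact (semiconjBy_mul_of_braid hbraid).mul_left htail

end DescendingProducts

theorem E6_beta2_general {G : Type*} [Group G] {x : ℤ → G} {n j : ℤ} (hj : j ≤ n - 2)
    (hbraid : x n * x (n - 2) * x n = x (n - 2) * x n * x (n - 2))
    (hcomm : ∀ k, j ≤ k → k < n → k ≠ n - 2 → Commute (x k) (x n)) :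
    primProd x n j * x (n - 1) * x n = x (n - 2) * primProd x n j * x (n - 1) := by
  have hprim : SemiconjBy (primProd x n j) (x n) (x (n - 2)) :=
    semiconjBy_primProd hj hbraid fun k hjk hkn => hcomm k hjk (by lia) hkn.ne
  have hlast : Commute (x (n - 1)) (x n) := hcomm (n - 1) (by lia) (by lia) (by lia)
  exact (hprim.mul_left hlast).eq.trans (mul_assoc _ _ _).symm

theorem E6_beta2 (G : Type*) [Group G] (x : ℤ → G)
    (hsq : ∀ i : ℤ, 1 ≤ i → i ≤ 6 → x i ^ 2 = 1)
    (hbraid : ∀ i : ℤ, 1 ≤ i → i ≤ 3 → x (i+1) * x i * x (i+1) = x i * x (i+1) * x i)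
    (h53 : x 5 * x 3 * x 5 = x 3 * x 5 * x 3)
    (h64 : x 6 * x 4 * x 6 = x 4 * x 6 * x 4)
    (hcomm : ∀ i j : ℤ, 1 ≤ j → j + 1 < i → i ≤ 4 → x i * x j = x j * x i)
    (hcomm5 : ∀ i : ℤ, 1 ≤ i → i ≤ 6 → i ≠ 3 → i ≠ 5 → x 5 * x i = x i * x 5)
    (hcomm6 : ∀ i : ℤ, 1 ≤ i → i ≤ 6 → i ≠ 4 → i ≠ 6 → x 6 * x i = x i * x 6) :
    ∀ i : ℤ, 1 ≤ i → i ≤ 3 →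
      primProd x 5 i * x 4 * x 5 = x 3 * primProd x 5 i * x 4 := by
  intro i hi1 hi3
  exact E6_beta2_general (n := 5) hi3 h53 fun k hik hk5 hk3 =>
    (hcomm5 k (hi1.trans hik) (by lia) hk3 hk5.ne).symm
end

section
/- In the Coxeter group W of type E8, for all integers i1, i2, k1 with −1 ≤ i1 < i2 ≤ 1 and −1 ≤ k1 ≤ 3, the identity x'_{6,i1} · x'_{5,i2} · x_{4,2} · x'_{5,3} · x4 · x5 · x'_{6,−1} · x'_{5,0} · x_{4,1} · x'_{5,2} · x_{4,3} · x5 · x'_{6,k1} · x5 = x4 · x'_{6,i1} · x'_{5,i2} · x_{4,2} · x'_{5,3} · x4 · x5 · x'_{6,−1} · x'_{5,0} · x_{4,1} · x'_{5,2} · x_{4,3} · x5 · x'_{6,k1} holds. -/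
/-!
Conjugation by the left-hand word carries `x 5` to `x 4`, and it does so through `x 6`.
Its last letters contain `x 4 * x 3 * x 5 * x 6 * x 4 * x 3`, which runs along the path
`5 — 3 — 4 — 6` of the diagram and turns `x 5` into `x 6`; the factor `primProd x 6 i1` finally
turns `x 6` into `x 4`. In between, everything commutes with `x 6`. The only part for which this is
not a letter-by-letter observation is `d * x 5 * x 6 * d` with `d = signChange x`. In the
subdiagram `D₅` on `2, …, 6`, the pair `x 6, d` satisfies the braid relation of length four (as in
the folding of `D` to `B`), and `d` carries `x 2` to `x 5`. Hence
`d * x 5 * x 6 * d = d * x 6 * d * x 2`, and both `d * x 6 * d` and `x 2` commute with `x 6`.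
-/

section Monoid

variable {M : Type*} [Monoid M] {a d p q s t : M}

/-- The braid relation of length three, attached to a simple edge of a Coxeter diagram. -/
def Braid (s t : M) : Prop :=
  s * t * s = t * s * t

/-- The braid relation of length four, attached to a double edge of a Coxeter diagram. -/
def BraidFour (s t : M) : Prop :=
  s * t * s * t = t * s * t * s

theorem Braid.symm (h : Braid s t) : Braid t s :=
  Eq.symm h

theorem Braid.semiconjBy (h : Braid s t) : SemiconjBy (s * t) s t := by
  simpa only [SemiconjBy, Braid, mul_assoc] using h

theorem Braid.braidFour_mul (hp : Braid t p) (hq : Braid t q) (hpq : Commute p q) :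
    BraidFour t (p * q) :=
  calc
    t * (p * q) * t * (p * q) = t * p * (q * t * q) * p := by
      nth_rw 2 [hpq.eq]; simp only [mul_assoc]
    _ = (t * p * t) * q * t * p := by rw [← hq]; simp only [mul_assoc]
    _ = p * t * (p * q) * t * p := by rw [hp]; simp only [mul_assoc]
    _ = p * t * q * (p * t * p) := by rw [hpq.eq]; simp only [mul_assoc]
    _ = p * (t * q * t) * p * t := by rw [← hp]; simp only [mul_assoc]
    _ = p * q * t * (q * p) * t := by rw [hq]; simp only [mul_assoc]
    _ = p * q * t * (p * q) * t := by rw [hpq.eq]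

theorem BraidFour.braidFour_mul_mul (h : BraidFour t a) (hst : Braid s t) (hsa : Commute s a) :
    BraidFour s (t * a * t) :=
  calc
    s * (t * a * t) * s * (t * a * t) = s * t * a * (t * s * t) * a * t := by
      simp only [mul_assoc]
    _ = s * t * (a * s) * t * (s * a) * t := by rw [← hst]; simp only [mul_assoc]
    _ = (s * t * s) * a * t * a * s * t := by rw [← hsa.eq]; simp only [mul_assoc, hsa.eq]
    _ = t * s * (t * a * t * a) * s * t := by rw [hst]; simp only [mul_assoc]
    _ = t * (s * a) * t * a * (t * s * t) := by rw [h]; simp only [mul_assoc]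
    _ = t * a * s * t * (a * s) * t * s := by rw [hsa.eq, ← hst]; simp only [mul_assoc]
    _ = t * a * (s * t * s) * a * t * s := by rw [← hsa.eq]; simp only [mul_assoc]
    _ = t * a * t * s * (t * a * t) * s := by rw [hst]; simp only [mul_assoc]

theorem Braid.semiconjBy_mul_mul (hp : Braid t p) (hq : Braid t q) (hpq : Commute p q) :
    SemiconjBy (t * (p * q) * t) p q :=
  calc
    t * (p * q) * t * p = t * q * (p * t * p) := by rw [hpq.eq]; simp only [mul_assoc]
    _ = (t * q * t) * p * t := by rw [← hp]; simp only [mul_assoc]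
    _ = q * t * (q * p) * t := by rw [hq]; simp only [mul_assoc]
    _ = q * (t * (p * q) * t) := by rw [← hpq.eq]; simp only [mul_assoc]

theorem BraidFour.commute_mul_mul_mul (h : BraidFour s d) (hd : SemiconjBy d p q)
    (hp : Commute p s) (hq : Commute q s) : Commute (d * q * s * d) s := by
  have slide : d * q * s * d = d * s * d * p := by
    simp only [mul_assoc, hd.eq]
    rw [← mul_assoc q, hq.eq, mul_assoc]
  calc
    d * q * s * d * s = d * s * d * (p * s) := by rw [slide, mul_assoc]
    _ = (d * s * d * s) * p := by rw [hp.eq, ← mul_assoc]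
    _ = s * (d * q * s * d) := by rw [← h, slide]; simp only [mul_assoc]

end Monoid

section DescendingProducts

variable {G : Type*} [Group G] {x : ℤ → G} {i j : ℤ} {g : G}

-- The list in `descProd` elaborates to `List.range _` coerced to a list of integers.
theorem descProd_eq_prod_map :
    descProd x i j = ((List.range (i + 1 - j).toNat).map fun n : ℕ => x (i - n)).prod := by
  simp only [descProd, List.bind_eq_flatMap, List.pure_def, ← List.map_eq_flatMap, List.map_map,
    Function.comp_def]

theorem descProd_eq_one (h : i < j) : descProd x i j = 1 := by
  simp [descProd, show (i + 1 - j).toNat = 0 by lia]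

theorem descProd_eq_mul (h : j ≤ i) : descProd x i j = x i * descProd x (i - 1) j := by
  have length_eq : (i + 1 - j).toNat = (i - 1 + 1 - j).toNat + 1 := by lia
  simp [descProd_eq_prod_map, length_eq, List.range_succ_eq_map, Function.comp_def, sub_sub,
    add_comm]

theorem descProd_self : descProd x i i = x i := by
  rw [descProd_eq_mul le_rfl, descProd_eq_one (sub_one_lt i), mul_one]

theorem primProd_eq_mul (h : j < i) : primProd x i j = x i * descProd x (i - 2) j :=
  if_neg h.not_ge

theorem commute_descProd (h : ∀ m, j ≤ m → m ≤ i → Commute g (x m)) :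
    Commute g (descProd x i j) := by
  rw [descProd_eq_prod_map]
  refine Commute.list_prod_right _ _ fun y hy => ?_
  obtain ⟨n, hn, rfl⟩ := List.mem_map.mp hy
  have := List.mem_range.mp hn
  exact h _ (by lia) (by lia)

theorem commute_primProd (hi : Commute g (x i)) (h : ∀ m, j ≤ m → m ≤ i - 2 → Commute g (x m)) :
    Commute g (primProd x i j) := by
  unfold primProd
  split_ifs
  · exact Commute.one_right g
  · exact hi.mul_right (commute_descProd h)

end DescendingProducts

/-- The defining relations of the Artin group of type `E₈`, i.e. those of the Coxeter group without
`x i ^ 2 = 1`. The diagram is the path `-1, 0, 1, 2, 3, 4, 6` with `5` attached to `3`; the values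
of `x` outside `-1, …, 6` are unconstrained. -/
structure ArtinE8Relations {G : Type*} [Group G] (x : ℤ → G) : Prop where
  braid_succ : ∀ i : ℤ, -1 ≤ i → i ≤ 3 → Braid (x (i + 1)) (x i)
  braid_five_three : Braid (x 5) (x 3)
  braid_six_four : Braid (x 6) (x 4)
  commute : ∀ i j : ℤ, -1 ≤ j → j + 1 < i → i ≤ 4 → Commute (x i) (x j)
  commute_five : ∀ i : ℤ, -1 ≤ i → i ≤ 6 → i ≠ 3 → i ≠ 5 → Commute (x 5) (x i)
  commute_six : ∀ i : ℤ, -1 ≤ i → i ≤ 6 → i ≠ 4 → i ≠ 6 → Commute (x 6) (x i)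

/-- An element attached to the subdiagram `D₄` on `2, 3, 4, 5`. Its image in the Coxeter group of
the `D₅` on `2, …, 6`, with roots `e₁ - e₂, e₂ - e₃, e₃ - e₄, e₄ - e₅, e₄ + e₅` for `6, 4, 3, 2, 5`,
changes the signs of `e₂` and `e₅`. -/
def signChange {G : Type*} [Group G] (x : ℤ → G) : G :=
  x 4 * (x 3 * (x 2 * x 5) * x 3) * x 4

namespace ArtinE8Relations

variable {G : Type*} [Group G] {x : ℤ → G} {i j k l : ℤ}

theorem commute_descProd_of_lt (h : ArtinE8Relations x) (hj : -1 ≤ j) (hi : i + 1 < k)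
    (hk : k ≤ 4) : Commute (x k) (descProd x i j) :=
  commute_descProd fun m _ _ => h.commute k m (by lia) (by lia) hk

theorem five_commute_descProd (h : ArtinE8Relations x) (hj : -1 ≤ j) (hi : i ≤ 2) :
    Commute (x 5) (descProd x i j) :=
  commute_descProd fun m _ _ => h.commute_five m (by lia) (by lia) (by lia) (by lia)

theorem six_commute_descProd (h : ArtinE8Relations x) (hj : -1 ≤ j) (hi : i ≤ 3) :
    Commute (x 6) (descProd x i j) :=
  commute_descProd fun m _ _ => h.commute_six m (by lia) (by lia) (by lia) (by lia)

theorem six_commute_primProd_five (h : ArtinE8Relations x) (hj : -1 ≤ j) :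
    Commute (x 6) (primProd x 5 j) :=
  commute_primProd (h.commute_six 5 (by lia) (by lia) (by lia) (by lia)) fun m _ _ =>
    h.commute_six m (by lia) (by lia) (by lia) (by lia)

theorem primProd_six_semiconjBy (h : ArtinE8Relations x) (hj : -1 ≤ j) (hj' : j ≤ 4) :
    SemiconjBy (primProd x 6 j) (x 6) (x 4) := by
  have split : primProd x 6 j = x 6 * x 4 * descProd x 3 j := by
    rw [primProd_eq_mul (by lia), descProd_eq_mul (by lia), ← mul_assoc]
    rfl
  rw [split]
  exact h.braid_six_four.semiconjBy.mul_left (h.six_commute_descProd hj le_rfl).symm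

theorem descProd_four_three_mul_primProd_six_semiconjBy (h : ArtinE8Relations x) (hk : -1 ≤ k)
    (hk' : k ≤ 3) : SemiconjBy (descProd x 4 3 * x 5 * primProd x 6 k) (x 5) (x 6) := by
  have commute_five_four := h.commute_five 4 (by lia) (by lia) (by lia) (by lia)
  have commute_five_six := h.commute_five 6 (by lia) (by lia) (by lia) (by lia)
  have commute_six_three := h.commute_six 3 (by lia) (by lia) (by lia) (by lia)
  have along_path : descProd x 4 3 * x 5 * primProd x 6 k =
      x 4 * x 6 * (x 3 * x 4) * (x 5 * x 3) * descProd x 2 k :=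
    calc
      _ = x 4 * x 3 * (x 5 * x 6) * x 4 * x 3 * descProd x 2 k := by
        rw [descProd_eq_mul (by lia), primProd_eq_mul (by lia), descProd_eq_mul (j := k) (by lia),
          descProd_eq_mul (j := k) (by lia)]
        norm_num only [descProd_self, mul_assoc]
      _ = x 4 * (x 3 * x 6) * (x 5 * x 4) * x 3 * descProd x 2 k := by
        rw [commute_five_six.eq]; simp only [mul_assoc]
      _ = _ := by rw [← commute_six_three.eq, commute_five_four.eq]; simp only [mul_assoc]
  rw [along_path]
  exact ((h.braid_six_four.symm.semiconjBy.mul_left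
    (h.braid_succ 3 (by lia) le_rfl).symm.semiconjBy).mul_left
    h.braid_five_three.semiconjBy).mul_left (h.five_commute_descProd hk le_rfl).symm

theorem six_braidFour_signChange (h : ArtinE8Relations x) : BraidFour (x 6) (signChange x) := by
  have commute_six_three := h.commute_six 3 (by lia) (by lia) (by lia) (by lia)
  have three_pair : BraidFour (x 3) (x 2 * x 5) :=
    (h.braid_succ 2 (by lia) (by lia)).braidFour_mul h.braid_five_three.symm
      (h.commute_five 2 (by lia) (by lia) (by lia) (by lia)).symm
  have four_pair : BraidFour (x 4) (x 3 * (x 2 * x 5) * x 3) :=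
    three_pair.braidFour_mul_mul (h.braid_succ 3 (by lia) le_rfl)
      ((h.commute 4 2 (by lia) (by lia) le_rfl).mul_right
        (h.commute_five 4 (by lia) (by lia) (by lia) (by lia)).symm)
  exact four_pair.braidFour_mul_mul h.braid_six_four
    ((commute_six_three.mul_right
      ((h.commute_six 2 (by lia) (by lia) (by lia) (by lia)).mul_right
        (h.commute_six 5 (by lia) (by lia) (by lia) (by lia)))).mul_right commute_six_three)

theorem signChange_semiconjBy (h : ArtinE8Relations x) :
    SemiconjBy (signChange x) (x 2) (x 5) := by
  have fix_two : SemiconjBy (x 4) (x 2) (x 2) := h.commute 4 2 (by lia) (by lia) le_rfl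
  have fix_five : SemiconjBy (x 4) (x 5) (x 5) :=
    (h.commute_five 4 (by lia) (by lia) (by lia) (by lia)).symm
  have two_to_five : SemiconjBy (x 3 * (x 2 * x 5) * x 3) (x 2) (x 5) :=
    (h.braid_succ 2 (by lia) (by lia)).semiconjBy_mul_mul h.braid_five_three.symm
      (h.commute_five 2 (by lia) (by lia) (by lia) (by lia)).symm
  exact (fix_five.mul_left two_to_five).mul_left fix_two

theorem signChange_mul_five_six_mul_commute (h : ArtinE8Relations x) :
    Commute (signChange x * x 5 * x 6 * signChange x) (x 6) :=
  h.six_braidFour_signChange.commute_mul_mul_mul h.signChange_semiconjBy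
    (h.commute_six 2 (by lia) (by lia) (by lia) (by lia)).symm
    (h.commute_six 5 (by lia) (by lia) (by lia) (by lia)).symm

theorem descProd_four_two_mul_eq_signChange_mul (h : ArtinE8Relations x) (hj : -1 ≤ j)
    (hj' : j ≤ 2) (hk : -1 ≤ k) (hk' : k ≤ 3) (hl : l ≤ 4) :
    descProd x 4 2 * primProd x 5 3 * x 4 * x 5 * primProd x 6 j * primProd x 5 k *
        descProd x 4 l =
      signChange x * x 5 * x 6 * signChange x *
        (descProd x 1 j * descProd x 2 k * descProd x 3 l) := by
  have expand_six : primProd x 6 j = x 6 * x 4 * x 3 * x 2 * descProd x 1 j := by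
    rw [primProd_eq_mul (by lia), descProd_eq_mul (by lia), descProd_eq_mul (by lia),
      descProd_eq_mul (by lia)]
    norm_num only [mul_assoc]
  have expand_five : primProd x 5 k = x 5 * x 3 * descProd x 2 k := by
    rw [primProd_eq_mul (by lia), descProd_eq_mul (by lia)]
    norm_num only [mul_assoc]
  have expand_four : descProd x 4 l = x 4 * descProd x 3 l := descProd_eq_mul hl
  have expand_head : descProd x 4 2 * primProd x 5 3 = x 4 * x 3 * x 2 * (x 5 * x 3) := by
    rw [descProd_eq_mul (by lia), descProd_eq_mul (by lia), primProd_eq_mul (by lia)]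
    norm_num only [descProd_self, mul_assoc]
  have commute_tail_one : Commute (x 5 * x 3 * x 4) (descProd x 1 j) :=
    ((h.five_commute_descProd hj (by lia)).mul_left
      (h.commute_descProd_of_lt hj (by lia) (by lia))).mul_left
      (h.commute_descProd_of_lt hj (by lia) le_rfl)
  have commute_tail_two : Commute (x 4) (descProd x 2 k) :=
    h.commute_descProd_of_lt hk (by lia) le_rfl
  calc
    _ = x 4 * x 3 * x 2 * (x 5 * x 3) * x 4 * x 5 * (x 6 * x 4 * x 3 * x 2) *
        (descProd x 1 j * (x 5 * x 3 * (descProd x 2 k * x 4))) * descProd x 3 l := by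
      rw [expand_head, expand_six, expand_five, expand_four]; simp only [mul_assoc]
    _ = x 4 * x 3 * x 2 * (x 5 * x 3) * x 4 * x 5 * (x 6 * x 4 * x 3 * x 2) *
        (descProd x 1 j * (x 5 * x 3 * x 4)) * descProd x 2 k * descProd x 3 l := by
      rw [← commute_tail_two.eq]; simp only [mul_assoc]
    _ = _ := by rw [← commute_tail_one.eq]; simp only [signChange, mul_assoc]

theorem descProd_four_two_mul_commute_six (h : ArtinE8Relations x) (hj : -1 ≤ j) (hj' : j ≤ 2)
    (hk : -1 ≤ k) (hk' : k ≤ 3) (hl : -1 ≤ l) (hl' : l ≤ 4) :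
    Commute (descProd x 4 2 * primProd x 5 3 * x 4 * x 5 * primProd x 6 j * primProd x 5 k *
      descProd x 4 l) (x 6) := by
  rw [h.descProd_four_two_mul_eq_signChange_mul hj hj' hk hk' hl']
  exact h.signChange_mul_five_six_mul_commute.mul_left
    (((h.six_commute_descProd hj (by lia)).mul_right
      (h.six_commute_descProd hk (by lia))).mul_right (h.six_commute_descProd hl le_rfl)).symm

end ArtinE8Relations

theorem E8_f9_general {G : Type*} [Group G] {x : ℤ → G} (h : ArtinE8Relations x) {i1 i2 k1 : ℤ}
    (hi1 : -1 ≤ i1) (hi1' : i1 ≤ 4) (hi2 : -1 ≤ i2) (hk1 : -1 ≤ k1) (hk1' : k1 ≤ 3) :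
    SemiconjBy
      (primProd x 6 i1 * primProd x 5 i2 * descProd x 4 2 * primProd x 5 3 * x 4 * x 5 *
        primProd x 6 (-1) * primProd x 5 0 * descProd x 4 1 * primProd x 5 2 * descProd x 4 3 *
        x 5 * primProd x 6 k1) (x 5) (x 4) := by
  have five_to_six := h.descProd_four_three_mul_primProd_six_semiconjBy hk1 hk1'
  have fix_six_right : Commute (primProd x 5 2) (x 6) :=
    (h.six_commute_primProd_five (by lia)).symm
  have fix_six_middle := h.descProd_four_two_mul_commute_six (j := -1) (k := 0) (l := 1)
    (by lia) (by lia) (by lia) (by lia) (by lia) (by lia)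
  have fix_six_left : Commute (primProd x 5 i2) (x 6) := (h.six_commute_primProd_five hi2).symm
  have six_to_four := h.primProd_six_semiconjBy hi1 hi1'
  simpa only [mul_assoc] using
    (((six_to_four.mul_left fix_six_left).mul_left fix_six_middle).mul_left
      fix_six_right).mul_left five_to_six

theorem E8_f9 (G : Type*) [Group G] (x : ℤ → G)
    (hsq : ∀ i : ℤ, (-1) ≤ i → i ≤ 6 → x i ^ 2 = 1)
    (hbraid : ∀ i : ℤ, (-1) ≤ i → i ≤ 3 → x (i+1) * x i * x (i+1) = x i * x (i+1) * x i)
    (h53 : x 5 * x 3 * x 5 = x 3 * x 5 * x 3)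
    (h64 : x 6 * x 4 * x 6 = x 4 * x 6 * x 4)
    (hcomm : ∀ i j : ℤ, (-1) ≤ j → j + 1 < i → i ≤ 4 → x i * x j = x j * x i)
    (hcomm5 : ∀ i : ℤ, (-1) ≤ i → i ≤ 6 → i ≠ 3 → i ≠ 5 → x 5 * x i = x i * x 5)
    (hcomm6 : ∀ i : ℤ, (-1) ≤ i → i ≤ 6 → i ≠ 4 → i ≠ 6 → x 6 * x i = x i * x 6) :
    ∀ i1 i2 k1 : ℤ, -1 ≤ i1 → i1 < i2 → i2 ≤ 1 → -1 ≤ k1 → k1 ≤ 3 →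
      primProd x 6 i1 * primProd x 5 i2 * descProd x 4 2 * primProd x 5 3 * x 4 * x 5 *
        primProd x 6 (-1) * primProd x 5 0 * descProd x 4 1 * primProd x 5 2 * descProd x 4 3 *
        x 5 * primProd x 6 k1 * x 5 =
      x 4 * primProd x 6 i1 * primProd x 5 i2 * descProd x 4 2 * primProd x 5 3 * x 4 * x 5 *
        primProd x 6 (-1) * primProd x 5 0 * descProd x 4 1 * primProd x 5 2 * descProd x 4 3 *
        x 5 * primProd x 6 k1 := by
  intro i1 i2 k1 hi1 hi12 hi2 hk1 hk1'
  have relations : ArtinE8Relations x := ⟨hbraid, h53, h64, hcomm, hcomm5, hcomm6⟩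
  simpa only [SemiconjBy, mul_assoc] using
    E8_f9_general relations hi1 (by lia) (by lia) hk1 hk1'
end
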